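/- arXiv:2104.12415 — 4 statements merged into one kernel-verified Lean document; each statement's English description precedes it below -/
import Mathlib

section
/- Let (A,S,Z,Φ) be a structured C*-algebra. The domination relation is interpolative: for all a,b ∈ S, if a < b then there exists c ∈ S with a < c and c < b. -/
variable {A : Type*} [CStarAlgebra A] [PartialOrder A] [StarOrderedRing A]

/-- A structured C*-algebra `(A, S, Z, Φ)`. -/
structure StructuredCStar (A : Type*) [CStarAlgebra A] [PartialOrder A]
    [StarOrderedRing A] where
  /-- The expectation. -/
  Φ : A →ₗ[ℂ] A
  /-- The distinguished closed *-subsemigroup. -/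
  S : Set A
  /-- The distinguished central C*-subalgebra. -/
  Z : Set A
  Φ_idem : ∀ a : A, Φ (Φ a) = Φ a
  Φ_contractive : ∀ a : A, ‖Φ a‖ ≤ ‖a‖
  Φ_pos : ∀ a : A, 0 ≤ a → 0 ≤ Φ a
  Φ_mul_left : ∀ a b : A, Φ (Φ a * b) = Φ a * Φ b
  Φ_mul_right : ∀ a b : A, Φ (a * Φ b) = Φ a * Φ b
  S_isClosed : IsClosed S
  S_mul : ∀ a ∈ S, ∀ b ∈ S, a * b ∈ S
  S_star : ∀ a ∈ S, star a ∈ S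
  S_smul : ∀ (c : ℂ), ∀ a ∈ S, c • a ∈ S
  Z_sub_S : Z ⊆ S
  Z_isClosed : IsClosed Z
  Z_add : ∀ a ∈ Z, ∀ b ∈ Z, a + b ∈ Z
  Z_mul : ∀ a ∈ Z, ∀ b ∈ Z, a * b ∈ Z
  Z_star : ∀ a ∈ Z, star a ∈ Z
  Z_smul : ∀ (c : ℂ), ∀ a ∈ Z, c • a ∈ Z
  Z_fixed : ∀ z ∈ Z, Φ z = z
  Z_central : ∀ z ∈ Z, ∀ a : A, z * Φ a = Φ a * z
  PhiS_add : ∀ x ∈ Φ '' S, ∀ y ∈ Φ '' S, x + y ∈ Φ '' S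
  PhiS_ideal_right : ∀ x ∈ Φ '' S, ∀ a : A, x * Φ a ∈ Φ '' S
  PhiS_ideal_left : ∀ x ∈ Φ '' S, ∀ a : A, Φ a * x ∈ Φ '' S
  S_sq_sub_PhiS : ∀ s ∈ S, star s * s ∈ Φ '' S
  PhiS_sub_S : ∀ s ∈ S, Φ s ∈ S

namespace StructuredCStar

variable (𝒜 : StructuredCStar A)

/-- `a <_s b` : domination witnessed by `s`. -/
def domBy (a s b : A) : Prop :=
  a = a * s * b ∧ a = b * s * a ∧
  a * s ∈ 𝒜.Φ '' 𝒜.S ∧ s * a ∈ 𝒜.Φ '' 𝒜.S ∧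
  b * s ∈ 𝒜.Z ∧ s * b ∈ 𝒜.Z

/-- `a < b` : domination. -/
def dom (a b : A) : Prop := ∃ s ∈ 𝒜.S, 𝒜.domBy a s b

/-- `N ⊆ S` is binormal. -/
def Binormal (N : Set A) : Prop :=
  ∀ a ∈ 𝒜.S, ∀ b ∈ 𝒜.S, a * b ∈ N → ∀ z ∈ N, a * z * b ∈ N

/-- `B ⊆ S` is bistable. -/
def Bistable (B : Set A) : Prop :=
  ∀ a ∈ 𝒜.S, ∀ b ∈ 𝒜.S, a * b ∈ B → 𝒜.Φ a * b ∈ B ∧ a * 𝒜.Φ b ∈ B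

/-- `P ⊆ S` is productive. -/
def Productive (P : Set A) : Prop :=
  ∀ a ∈ 𝒜.S, 𝒜.Φ a ∈ closure ((a * ·) '' P) ∧ 𝒜.Φ a ∈ closure ((· * a) '' P)

end StructuredCStar

/-!
If `a <_s b` then `x = b * s` and `y = s * b` are normal elements of `Z` with `x * a = a = a * y`,
and `b` intertwines them: `x * b = b * y`. By the Fuglede–Putnam theorem, `f(x) * b = b * f(y)` for
every continuous `f` on `ℂ` with `f 0 = 0`. Choose such an `f` vanishing near `0`, with `f 1 = 1`,
and put `c = f(x) * b`. Then `f(x) * a = a = a * f(y)`, whence `a <_s c`; and as `f` vanishes near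
`0`, there is a continuous `k` with `f(z) * z * k(z) = f(z)` and `k 0 = 0`, whence `c <_t b` for
`t = s * k(x)`.
-/

theorem semiconjBy_cfcₙ {B : Type*} [NonUnitalCStarAlgebra B] {b x y : B} [hx : IsStarNormal x]
    [hy : IsStarNormal y] (h : SemiconjBy b x y) {f : ℂ → ℂ}
    (hf : ContinuousOn f (quasispectrum ℂ x ∪ quasispectrum ℂ y)) :
    SemiconjBy b (cfcₙ f x) (cfcₙ f y) := by
  -- The functional calculus of `(x, y)` is componentwise and generated by `(x, y)` and its adjoint.
  have hxy : IsStarNormal (x, y) := ⟨Prod.ext hx.star_comm_self hy.star_comm_self⟩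
  suffices SemiconjBy b (cfcₙ f (x, y)).1 (cfcₙ f (x, y)).2 by
    rwa [cfcₙ_map_prod (S := ℂ) f x y hf] at this
  refine cfcₙ_cases (fun q : B × B ↦ SemiconjBy b q.1 q.2) _ f (.zero_right b) fun hf hf₀ hxy ↦ ?_
  generalize (⟨⟨_, hf.domRestrict⟩, hf₀⟩ : ContinuousMapZero (quasispectrum ℂ (x, y)) ℂ) = F
  induction F using ContinuousMapZero.induction_on_of_compact with
  | zero => simp
  | id => simpa only [cfcₙHom_id hxy] using! h
  | star_id => simpa only [map_star, cfcₙHom_id hxy] using! h.star_right hx hy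
  | add F G hF hG => simpa only [map_add] using! hF.add_right hG
  | mul F G hF hG => simpa only [map_mul] using! hF.mul_right hG
  | smul r F hF => simpa only [map_smul] using! hF.smul_right r
  | frequently F hF =>
    exact hF.mem_of_closed (isClosed_eq (by fun_prop) (by fun_prop))

theorem semiconjBy_cfcₙ_mul_comm {B : Type*} [NonUnitalCStarAlgebra B] {b s : B}
    [IsStarNormal (b * s)] [IsStarNormal (s * b)] {f : ℂ → ℂ}
    (hf : ContinuousOn f (quasispectrum ℂ (b * s))) :
    SemiconjBy b (cfcₙ f (s * b)) (cfcₙ f (b * s)) :=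
  semiconjBy_cfcₙ (mul_assoc b s b).symm <| by
    rwa [quasispectrum.mul_comm s b, Set.union_self]

section Eigenvector

variable {B : Type*} [CStarAlgebra B] {x a : B} {μ : ℂ} {f : ℂ → ℂ}

theorem continuousOn_quasispectrum_algebraMap (f : ℂ → ℂ) (μ : ℂ) :
    ContinuousOn f (quasispectrum ℂ (algebraMap ℂ B μ)) := by
  refine ((Set.finite_singleton μ).union (Set.finite_singleton 0)).continuousOn f |>.mono ?_
  rw [quasispectrum_eq_spectrum_union_zero]
  exact Set.union_subset_union_left _ (CFC.spectrum_algebraMap_subset μ)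

theorem cfcₙ_algebraMap (hf₀ : f 0 = 0) :
    cfcₙ f (algebraMap ℂ B μ) = algebraMap ℂ B (f μ) := by
  rw [cfcₙ_eq_cfc (continuousOn_quasispectrum_algebraMap f μ), cfc_algebraMap]

theorem continuousOn_quasispectrum_union_algebraMap (hf : ContinuousOn f (quasispectrum ℂ x)) :
    ContinuousOn f (quasispectrum ℂ x ∪ quasispectrum ℂ (algebraMap ℂ B μ)) :=
  hf.union_of_isClosed (continuousOn_quasispectrum_algebraMap f μ)
    (quasispectrum.isCompact x).isClosed (quasispectrum.isCompact _).isClosed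

variable [IsStarNormal x]

theorem mul_cfcₙ_of_mul_eq_smul (h : a * x = μ • a) (hf : ContinuousOn f (quasispectrum ℂ x))
    (hf₀ : f 0 = 0) : a * cfcₙ f x = f μ • a := by
  have hμ : IsStarNormal (algebraMap ℂ B μ) := cfc_predicate_algebraMap μ
  have hax : SemiconjBy a x (algebraMap ℂ B μ) := by rw [SemiconjBy, h, Algebra.smul_def]
  rw [(semiconjBy_cfcₙ hax (continuousOn_quasispectrum_union_algebraMap hf)).eq,
    cfcₙ_algebraMap hf₀, Algebra.smul_def]

theorem cfcₙ_mul_of_mul_eq_smul (h : x * a = μ • a) (hf : ContinuousOn f (quasispectrum ℂ x))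
    (hf₀ : f 0 = 0) : cfcₙ f x * a = f μ • a := by
  have hμ : IsStarNormal (algebraMap ℂ B μ) := cfc_predicate_algebraMap μ
  have hax : SemiconjBy a (algebraMap ℂ B μ) x := by
    rw [SemiconjBy, h, ← Algebra.commutes, Algebra.smul_def]
  have hcont := Set.union_comm _ _ ▸ continuousOn_quasispectrum_union_algebraMap (μ := μ) hf
  rw [← (semiconjBy_cfcₙ hax hcont).eq, cfcₙ_algebraMap hf₀, ← Algebra.commutes, Algebra.smul_def]

end Eigenvector

theorem cfcₙ_mul_mul_cfcₙ_eq_left {R B : Type*} {p : B → Prop} [CommSemiring R] [Nontrivial R]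
    [StarRing R] [MetricSpace R] [IsTopologicalSemiring R] [ContinuousStar R] [NonUnitalRing B]
    [StarRing B] [TopologicalSpace B] [Module R B] [IsScalarTower R B B] [SMulCommClass R B B]
    [NonUnitalContinuousFunctionalCalculus R B p] {f k : R → R} {x : B} (hx : p x)
    (hf : ContinuousOn f (quasispectrum R x)) (hf₀ : f 0 = 0)
    (hk : ContinuousOn k (quasispectrum R x)) (hk₀ : k 0 = 0)
    (hfk : (quasispectrum R x).EqOn (fun z ↦ f z * (z * k z)) f) :
    cfcₙ f x * (x * cfcₙ k x) = cfcₙ f x :=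
  calc
    cfcₙ f x * (x * cfcₙ k x) = cfcₙ (fun z ↦ f z * (z * k z)) x := by
      rw [cfcₙ_mul .., cfcₙ_mul .., cfcₙ_id' R x]
    _ = cfcₙ f x := cfcₙ_congr hfk

theorem exists_continuous_cutoff_inverse (𝕜 : Type*) [RCLike 𝕜] :
    ∃ f k : 𝕜 → 𝕜, Continuous f ∧ Continuous k ∧ f 0 = 0 ∧ k 0 = 0 ∧ f 1 = 1 ∧
      ∀ z, f z * (z * k z) = f z := by
  have h_pos (z : 𝕜) : 0 < max (‖z‖ ^ 2) (1 / 4) := lt_max_of_lt_right (by norm_num)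
  refine ⟨fun z ↦ (max 0 (2 * ‖z‖ - 1) : ℝ), fun z ↦ star z / (max (‖z‖ ^ 2) (1 / 4) : ℝ),
    by fun_prop, ?_, by simp, by simp, by norm_num, fun z ↦ ?_⟩
  · exact continuous_star.div (by fun_prop) fun z ↦ RCLike.ofReal_ne_zero.2 (h_pos z).ne'
  · rcases le_total ‖z‖ (1 / 2) with hz | hz
    · have : max 0 (2 * ‖z‖ - 1) = 0 := max_eq_left (by linarith)
      simp [this]
    · have hmax : max (‖z‖ ^ 2) (1 / 4) = ‖z‖ ^ 2 := max_eq_left (by nlinarith)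
      have hz₀ : z ≠ 0 := norm_pos_iff.1 (by linarith)
      have hinv : z * (star z / (max (‖z‖ ^ 2) (1 / 4) : ℝ)) = 1 := by
        rw [hmax, ← mul_div_assoc, RCLike.star_def, RCLike.mul_conj, RCLike.ofReal_pow,
          div_self (by simpa using hz₀)]
      rw [hinv, mul_one]

namespace StructuredCStar

variable (𝒜 : StructuredCStar A) {a b g h k l s x y : A}

/-- The central C*-subalgebra `Z` as a bundled star subalgebra, so that Mathlib's results on the
subalgebra generated by a normal element apply to it. -/
def centralSubalgebra (hZ : 𝒜.Z.Nonempty) : NonUnitalStarSubalgebra ℂ A where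
  carrier := 𝒜.Z
  add_mem' hx hy := 𝒜.Z_add _ hx _ hy
  zero_mem' := by simpa using 𝒜.Z_smul 0 _ hZ.some_mem
  mul_mem' hx hy := 𝒜.Z_mul _ hx _ hy
  smul_mem' c _ := 𝒜.Z_smul c _
  star_mem' := 𝒜.Z_star _

theorem cfcₙ_mem_Z (hx : x ∈ 𝒜.Z) (f : ℂ → ℂ) : cfcₙ f x ∈ 𝒜.Z :=
  NonUnitalStarAlgebra.elemental.le_of_mem (s := 𝒜.centralSubalgebra ⟨x, hx⟩) 𝒜.Z_isClosed hx
    (cfcₙ_mem_elemental f x)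

variable {𝒜}

theorem commute_of_mem_Z (hx : x ∈ 𝒜.Z) (hy : y ∈ 𝒜.Z) : Commute x y := by
  simpa only [commute_iff_eq, 𝒜.Z_fixed y hy] using 𝒜.Z_central x hx y

theorem isStarNormal_of_mem_Z (hx : x ∈ 𝒜.Z) : IsStarNormal x :=
  ⟨commute_of_mem_Z (𝒜.Z_star x hx) hx⟩

theorem Z_subset_image_S : 𝒜.Z ⊆ 𝒜.Φ '' 𝒜.S :=
  fun x hx ↦ ⟨x, 𝒜.Z_sub_S hx, 𝒜.Z_fixed x hx⟩

theorem domBy.mul_left (hab : 𝒜.domBy a s b) (hg : g ∈ 𝒜.Z) (hh : h ∈ 𝒜.Z)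
    (hb : SemiconjBy b h g) (hga : g * a = a) (hah : a * h = a) : 𝒜.domBy a s (g * b) := by
  obtain ⟨hasb, hbsa, has, hsa, hbs, hsb⟩ := hab
  refine ⟨?_, ?_, has, hsa, ?_, ?_⟩
  · rw [← hb.eq, ← mul_assoc, ← hasb, hah]
  · rw [mul_assoc g, mul_assoc g, ← hbsa, hga]
  · rw [mul_assoc]
    exact 𝒜.Z_mul _ hg _ hbs
  · rw [← hb.eq, ← mul_assoc]
    exact 𝒜.Z_mul _ hsb _ hh

theorem domBy_mul_self (hg : g ∈ 𝒜.Z) (hh : h ∈ 𝒜.Z) (hk : k ∈ 𝒜.Z) (hl : l ∈ 𝒜.Z)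
    (hbs : b * s ∈ 𝒜.Z) (hsb : s * b ∈ 𝒜.Z) (hb : SemiconjBy b h g) (hs : SemiconjBy s k l)
    (hgk : g * (b * s * k) = g) (hhl : h * (s * b * l) = h) :
    𝒜.domBy (g * b) (s * k) b := by
  have hbt : b * (s * k) = b * s * k := (mul_assoc ..).symm
  have htb : s * k * b = s * b * l := by
    rw [hs.eq, mul_assoc, (commute_of_mem_Z hl hsb).eq]
  have hct : g * b * (s * k) = g := by rw [mul_assoc, hbt, hgk]
  have htc : s * k * (g * b) = h := by
    rw [← hb.eq, ← mul_assoc, htb, ← (commute_of_mem_Z hh (𝒜.Z_mul _ hsb _ hl)).eq, hhl]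
  refine ⟨?_, ?_, ?_, ?_, ?_, ?_⟩
  · rw [hct]
  · rw [mul_assoc, htc, hb.eq]
  · rw [hct]
    exact Z_subset_image_S hg
  · rw [htc]
    exact Z_subset_image_S hh
  · rw [hbt]
    exact 𝒜.Z_mul _ hbs _ hk
  · rw [htb]
    exact 𝒜.Z_mul _ hsb _ hl

theorem domBy.cfcₙ_mul {f : ℂ → ℂ} (hab : 𝒜.domBy a s b)
    (hf : ContinuousOn f (quasispectrum ℂ (b * s))) (hf₀ : f 0 = 0) (hf₁ : f 1 = 1) :
    𝒜.domBy a s (cfcₙ f (b * s) * b) := by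
  have ⟨hasb, hbsa, _, _, hbs, hsb⟩ := hab
  have := isStarNormal_of_mem_Z hbs
  have := isStarNormal_of_mem_Z hsb
  have hf' : ContinuousOn f (quasispectrum ℂ (s * b)) := by rwa [quasispectrum.mul_comm]
  have hfa : cfcₙ f (b * s) * a = a := by
    have h_fix : b * s * a = (1 : ℂ) • a := by rw [one_smul, ← hbsa]
    rw [cfcₙ_mul_of_mul_eq_smul h_fix hf hf₀, hf₁, one_smul]
  have haf : a * cfcₙ f (s * b) = a := by
    have h_fix : a * (s * b) = (1 : ℂ) • a := by rw [one_smul, ← mul_assoc, ← hasb]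
    rw [mul_cfcₙ_of_mul_eq_smul h_fix hf' hf₀, hf₁, one_smul]
  exact hab.mul_left (𝒜.cfcₙ_mem_Z hbs f) (𝒜.cfcₙ_mem_Z hsb f) (semiconjBy_cfcₙ_mul_comm hf)
    hfa haf

theorem domBy_cfcₙ_mul_self {f k : ℂ → ℂ} (hbs : b * s ∈ 𝒜.Z) (hsb : s * b ∈ 𝒜.Z)
    (hf : ContinuousOn f (quasispectrum ℂ (b * s))) (hf₀ : f 0 = 0)
    (hk : ContinuousOn k (quasispectrum ℂ (b * s))) (hk₀ : k 0 = 0)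
    (hfk : (quasispectrum ℂ (b * s)).EqOn (fun z ↦ f z * (z * k z)) f) :
    𝒜.domBy (cfcₙ f (b * s) * b) (s * cfcₙ k (b * s)) b := by
  have hbs_normal := isStarNormal_of_mem_Z hbs
  have hsb_normal := isStarNormal_of_mem_Z hsb
  have h_spec : quasispectrum ℂ (b * s) = quasispectrum ℂ (s * b) := quasispectrum.mul_comm b s
  exact domBy_mul_self (𝒜.cfcₙ_mem_Z hbs f) (𝒜.cfcₙ_mem_Z hsb f) (𝒜.cfcₙ_mem_Z hbs k)
    (𝒜.cfcₙ_mem_Z hsb k) hbs hsb (semiconjBy_cfcₙ_mul_comm hf)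
    (semiconjBy_cfcₙ_mul_comm (h_spec ▸ hk))
    (cfcₙ_mul_mul_cfcₙ_eq_left hbs_normal hf hf₀ hk hk₀ hfk)
    (cfcₙ_mul_mul_cfcₙ_eq_left hsb_normal (h_spec ▸ hf) hf₀ (h_spec ▸ hk) hk₀ (h_spec ▸ hfk))

end StructuredCStar

/-- the domination relation is interpolative. -/
theorem StructuredCStar.dom_interpolation (𝒜 : StructuredCStar A) {a b : A}
    (ha : a ∈ 𝒜.S) (hb : b ∈ 𝒜.S) (h : 𝒜.dom a b) :
    ∃ c ∈ 𝒜.S, 𝒜.dom a c ∧ 𝒜.dom c b := by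
  obtain ⟨s, hs, hab⟩ := h
  have ⟨_, _, _, _, hbs, hsb⟩ := hab
  obtain ⟨f, k, hf, hk, hf₀, hk₀, hf₁, hfk⟩ := exists_continuous_cutoff_inverse ℂ
  have hfZ : cfcₙ f (b * s) ∈ 𝒜.Z := 𝒜.cfcₙ_mem_Z hbs f
  have hkZ : cfcₙ k (b * s) ∈ 𝒜.Z := 𝒜.cfcₙ_mem_Z hbs k
  refine ⟨cfcₙ f (b * s) * b, 𝒜.S_mul _ (𝒜.Z_sub_S hfZ) b hb, ⟨s, hs, ?_⟩,
    s * cfcₙ k (b * s), 𝒜.S_mul s hs _ (𝒜.Z_sub_S hkZ), ?_⟩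
  · exact hab.cfcₙ_mul hf.continuousOn hf₀ hf₁
  · exact StructuredCStar.domBy_cfcₙ_mul_self hbs hsb hf.continuousOn hf₀ hk.continuousOn hk₀
      fun z _ ↦ hfk z
end

section
/- Let (A,S,Z,Φ) be a structured C*-algebra. Then (S,<) is a predomain: for all a,b,c ∈ S, if a < c and b < c then there exists d ∈ S with a < d, b < d and d < c. -/
variable {A : Type*} [CStarAlgebra A] [PartialOrder A] [StarOrderedRing A]

/-!
If `a <_s c`, then `s * star s * star c` also witnesses `a < c`. Witnesses of this form lie in
`Φ[S] * star c`, where they may be combined: two of them, `s` and `t`, are replaced by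
`r = s + t - s * c * t`, chosen so that `1 - r * c = (1 - s * c) * (1 - t * c)`. So `a` and `b` are
dominated by `c` with a common witness `r`.

As `c` intertwines the normal elements `r * c` and `c * r` of `Z`, it intertwines `g (r * c)` and
`g (c * r)` for every continuous `g`. If `g` vanishes near `0` and `g 1 = 1`, the interpolating
element is `d = g (c * r) * c = c * g (r * c)`: multiplication by `g (c * r)` fixes whatever is
fixed by `c * r`, so `a, b <_r d`, while inverting `c * r` on the support of `g` yields a witness
of `d < c`.
-/

section Intertwining

variable {B : Type*} [CStarAlgebra B]

/-- The pairs `(p, q)` such that `c` intertwines `p` with `q` and `star p` with `star q`, as a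
star subalgebra of the product. The functional calculus of a pair is computed coordinatewise, so
membership transfers intertwining relations to the functional calculus. -/
def intertwinedPairs (c : B) : StarSubalgebra ℂ (B × B) where
  carrier := {p | SemiconjBy c p.1 p.2 ∧ SemiconjBy c (star p.1) (star p.2)}
  add_mem' := by
    rintro p q ⟨hp, hp'⟩ ⟨hq, hq'⟩
    exact ⟨hp.add_right hq, by simpa using hp'.add_right hq'⟩
  mul_mem' := by
    rintro p q ⟨hp, hp'⟩ ⟨hq, hq'⟩
    exact ⟨hp.mul_right hq, by simpa using hq'.mul_right hp'⟩
  algebraMap_mem' z := by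
    have h (w : ℂ) : SemiconjBy c (algebraMap ℂ B w) (algebraMap ℂ B w) :=
      (Algebra.commutes w c).symm
    exact ⟨h z, by simpa only [algebraMap_star_comm] using! h (star z)⟩
  star_mem' := by
    rintro p ⟨hp, hp'⟩
    exact ⟨hp', by simpa using hp⟩

lemma isClosed_intertwinedPairs (c : B) : IsClosed (intertwinedPairs c : Set (B × B)) :=
  (isClosed_eq (by fun_prop) (by fun_prop)).inter (isClosed_eq (by fun_prop) (by fun_prop))

lemma semiconjBy_cfc {c x y : B} (hx : IsStarNormal x) (hy : IsStarNormal y)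
    (h : SemiconjBy c x y) {f : ℂ → ℂ} (hf : ContinuousOn f (spectrum ℂ x ∪ spectrum ℂ y)) :
    SemiconjBy c (cfc f x) (cfc f y) := by
  have hxy : IsStarNormal (x, y) := ⟨Prod.ext hx.star_comm_self hy.star_comm_self⟩
  have hmem : (x, y) ∈ intertwinedPairs c := ⟨h, h.star_right hx hy⟩
  have := isClosed_intertwinedPairs c
  have hcfc : (cfc f x, cfc f y) ∈ intertwinedPairs c :=
    cfc_map_prod (S := ℂ) f x y hf hxy hx hy ▸ cfc_mem f hmem
  exact hcfc.1

lemma mul_cfc_eq_self {a w : B} (hw : IsStarNormal w) (h : a * w = a) {f : ℂ → ℂ}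
    (hf : Continuous f) (hf₁ : f 1 = 1) : a * cfc f w = a := by
  have haw : SemiconjBy a w 1 := h.trans (one_mul a).symm
  simpa [SemiconjBy, cfc_apply_one, hf₁] using
    (semiconjBy_cfc hw inferInstance haw hf.continuousOn).eq

lemma cfc_mul_eq_self {a w : B} (hw : IsStarNormal w) (h : w * a = a) {f : ℂ → ℂ}
    (hf : Continuous f) (hf₁ : f 1 = 1) : cfc f w * a = a := by
  have haw : SemiconjBy a 1 w := (mul_one a).trans h.symm
  simpa [SemiconjBy, cfc_apply_one, hf₁] using
    (semiconjBy_cfc inferInstance hw haw hf.continuousOn).eq.symm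

lemma cfc_mul_mul_cfc_eq {x : B} (hx : IsStarNormal x) {g k : ℂ → ℂ}
    (hg : ContinuousOn g (spectrum ℂ x)) (hk : ContinuousOn k (spectrum ℂ x))
    (hgk : ∀ z ∈ spectrum ℂ x, g z * (z * k z) = g z) :
    cfc g x * (x * cfc k x) = cfc g x := by
  have hxk : x * cfc k x = cfc (fun z ↦ z * k z) x := by
    rw [cfc_mul (fun z ↦ z) k x, cfc_id' ℂ x]
  rw [hxk, ← cfc_mul g _ x]
  exact cfc_congr hgk

end Intertwining

/-- Here `g` vanishes near `0` and `k z = z⁻¹` on the support of `g`. -/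
lemma exists_continuous_cutoff :
    ∃ g k : ℂ → ℂ, Continuous g ∧ Continuous k ∧ g 0 = 0 ∧ k 0 = 0 ∧ g 1 = 1 ∧
      ∀ z, g z * (z * k z) = g z := by
  refine ⟨fun z ↦ (max 0 (2 * ‖z‖ ^ 2 - 1) : ℝ), fun z ↦ star z / (max (‖z‖ ^ 2) (1 / 2) : ℝ),
    by fun_prop, ?_, by simp, by simp, by norm_num, fun z ↦ ?_⟩
  · refine continuous_star.div (by fun_prop) fun z ↦ ?_
    exact_mod_cast (lt_max_of_lt_right one_half_pos).ne'
  · rcases le_total (‖z‖ ^ 2) (1 / 2) with hz | hz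
    · simp [max_eq_left (show 2 * ‖z‖ ^ 2 - 1 ≤ 0 by linarith)]
    · have hz₀ : (‖z‖ : ℂ) ^ 2 ≠ 0 := by exact_mod_cast (one_half_pos.trans_le hz).ne'
      have hzk : z * (star z / (max (‖z‖ ^ 2) (1 / 2) : ℝ)) = 1 := by
        rw [max_eq_left hz, ← mul_div_assoc, Complex.star_def, Complex.mul_conj',
          Complex.ofReal_pow, div_self hz₀]
      simp only [hzk, mul_one]

namespace StructuredCStar

variable {𝒜 : StructuredCStar A}

lemma mem_PhiS_of_mem_Z {z : A} (hz : z ∈ 𝒜.Z) : z ∈ 𝒜.Φ '' 𝒜.S :=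
  ⟨z, 𝒜.Z_sub_S hz, 𝒜.Z_fixed z hz⟩

lemma mem_S_of_mem_PhiS {x : A} (hx : x ∈ 𝒜.Φ '' 𝒜.S) : x ∈ 𝒜.S := by
  obtain ⟨s, hs, rfl⟩ := hx
  exact 𝒜.PhiS_sub_S s hs

lemma mul_mem_PhiS_of_right_mem_Z {x z : A} (hx : x ∈ 𝒜.Φ '' 𝒜.S) (hz : z ∈ 𝒜.Z) :
    x * z ∈ 𝒜.Φ '' 𝒜.S :=
  𝒜.Z_fixed z hz ▸ 𝒜.PhiS_ideal_right x hx z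

lemma mul_mem_PhiS_of_left_mem_Z {x z : A} (hz : z ∈ 𝒜.Z) (hx : x ∈ 𝒜.Φ '' 𝒜.S) :
    z * x ∈ 𝒜.Φ '' 𝒜.S := by
  simpa only [𝒜.Z_fixed z hz] using 𝒜.PhiS_ideal_left x hx z

lemma sub_mem_PhiS {x y : A} (hx : x ∈ 𝒜.Φ '' 𝒜.S) (hy : y ∈ 𝒜.Φ '' 𝒜.S) :
    x - y ∈ 𝒜.Φ '' 𝒜.S := by
  obtain ⟨s, hs, rfl⟩ := hy
  rw [sub_eq_add_neg]
  exact 𝒜.PhiS_add _ hx _ ⟨(-1 : ℂ) • s, 𝒜.S_smul _ s hs, by simp⟩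

lemma mul_star_self_mem_PhiS {s : A} (hs : s ∈ 𝒜.S) : s * star s ∈ 𝒜.Φ '' 𝒜.S := by
  simpa using 𝒜.S_sq_sub_PhiS _ (𝒜.S_star s hs)

lemma sub_mem_Z {z w : A} (hz : z ∈ 𝒜.Z) (hw : w ∈ 𝒜.Z) : z - w ∈ 𝒜.Z := by
  simpa [sub_eq_add_neg] using 𝒜.Z_add z hz _ (𝒜.Z_smul (-1) w hw)

lemma commute_of_mem_Z_s6 {z w : A} (hz : z ∈ 𝒜.Z) (hw : w ∈ 𝒜.Z) : Commute z w := by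
  simpa only [Commute, SemiconjBy, 𝒜.Z_fixed w hw] using 𝒜.Z_central z hz w

lemma isStarNormal_of_mem_Z_s6 {z : A} (hz : z ∈ 𝒜.Z) : IsStarNormal z :=
  ⟨commute_of_mem_Z_s6 (𝒜.Z_star z hz) hz⟩

lemma cfc_mem_Z {z : A} (hz : z ∈ 𝒜.Z) {f : ℂ → ℂ} (hf : Continuous f) (hf₀ : f 0 = 0) :
    cfc f z ∈ 𝒜.Z := by
  let T : NonUnitalStarSubalgebra ℂ A :=
    { carrier := 𝒜.Z
      add_mem' := fun hx hy ↦ 𝒜.Z_add _ hx _ hy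
      zero_mem' := by simpa using 𝒜.Z_smul 0 z hz
      mul_mem' := fun hx hy ↦ 𝒜.Z_mul _ hx _ hy
      smul_mem' := fun r _ hx ↦ 𝒜.Z_smul r _ hx
      star_mem' := fun hx ↦ 𝒜.Z_star _ hx }
  have : IsClosed (T : Set A) := 𝒜.Z_isClosed
  rw [← cfcₙ_eq_cfc hf.continuousOn hf₀]
  exact cfcₙ_mem (s := T) f hz

lemma domBy.congr_witness {a r s c : A} (h : 𝒜.domBy a s c) (hcr : c * r ∈ 𝒜.Z)
    (hrc : r * c ∈ 𝒜.Z) (har : a * (r * c) = a) (hra : c * r * a = a) : 𝒜.domBy a r c := by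
  obtain ⟨ha, ha', has, hsa, -, -⟩ := h
  refine ⟨by rw [mul_assoc, har], hra.symm, ?_, ?_, hcr, hrc⟩
  · have : a * r = a * s * (c * r) := by rw [← mul_assoc, ← ha]
    exact this ▸ mul_mem_PhiS_of_right_mem_Z has hcr
  · have : r * a = r * c * (s * a) := by rw [mul_assoc, ← mul_assoc c, ← ha']
    exact this ▸ mul_mem_PhiS_of_left_mem_Z hrc hsa

lemma domBy.mul_star_mul_star {a s c : A} (h : 𝒜.domBy a s c) :
    𝒜.domBy a (s * star s * star c) c := by
  obtain ⟨ha, ha', -, -, hcs, hsc⟩ := id h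
  have hcs_normal := isStarNormal_of_mem_Z_s6 hcs
  have hsc_normal := isStarNormal_of_mem_Z_s6 hsc
  have hc_star : c * star (s * c) = star (c * s) * c :=
    SemiconjBy.star_right hsc_normal hcs_normal (mul_assoc c s c).symm
  have ha_star : a * star (s * c) = a := by
    have : SemiconjBy a (s * c) 1 := by rw [SemiconjBy, ← mul_assoc, ← ha, one_mul]
    simpa [SemiconjBy] using this.star_right hsc_normal inferInstance
  have star_ha : star (c * s) * a = a := by
    have : SemiconjBy a 1 (c * s) := by rw [SemiconjBy, ← ha', mul_one]
    simpa [SemiconjBy] using (this.star_right inferInstance hcs_normal).symm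
  have hcr : c * (s * star s * star c) = c * s * star (c * s) := by
    simp only [star_mul, mul_assoc]
  have hrc : s * star s * star c * c = s * c * star (s * c) := by
    rw [mul_assoc s, ← star_mul, mul_assoc s, ← hc_star, ← mul_assoc]
  refine h.congr_witness ?_ ?_ ?_ ?_
  · exact hcr ▸ 𝒜.Z_mul _ hcs _ (𝒜.Z_star _ hcs)
  · exact hrc ▸ 𝒜.Z_mul _ hsc _ (𝒜.Z_star _ hsc)
  · rw [hrc, ← mul_assoc, ← mul_assoc, ← ha, ha_star]
  · rw [hcr, mul_assoc, star_ha, ← ha']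

lemma domBy.add_sub_mul {a b s t c : A} (has : 𝒜.domBy a s c) (hbt : 𝒜.domBy b t c) :
    𝒜.domBy a (s + t - s * c * t) c ∧ 𝒜.domBy b (s + t - s * c * t) c := by
  obtain ⟨ha, ha', -, -, hcs, hsc⟩ := id has
  obtain ⟨hb, hb', -, -, hct, htc⟩ := id hbt
  have hcr : c * (s + t - s * c * t) = c * s + c * t - c * s * (c * t) := by
    noncomm_ring
  have hrc : (s + t - s * c * t) * c = s * c + t * c - s * c * (t * c) := by
    noncomm_ring
  have hcrZ : c * (s + t - s * c * t) ∈ 𝒜.Z :=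
    hcr ▸ sub_mem_Z (𝒜.Z_add _ hcs _ hct) (𝒜.Z_mul _ hcs _ hct)
  have hrcZ : (s + t - s * c * t) * c ∈ 𝒜.Z :=
    hrc ▸ sub_mem_Z (𝒜.Z_add _ hsc _ htc) (𝒜.Z_mul _ hsc _ htc)
  rw [mul_assoc] at ha hb
  constructor
  · refine has.congr_witness hcrZ hrcZ ?_ ?_
    · rw [hrc, mul_sub, mul_add, ← mul_assoc a (s * c), ← ha, add_sub_cancel_right]
    · rw [hcr, (commute_of_mem_Z_s6 hcs hct).eq, sub_mul, add_mul, mul_assoc (c * t), ← ha',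
        add_sub_cancel_right]
  · refine hbt.congr_witness hcrZ hrcZ ?_ ?_
    · rw [hrc, (commute_of_mem_Z_s6 hsc htc).eq, mul_sub, mul_add, ← mul_assoc b (t * c), ← hb,
        add_sub_cancel_left]
    · rw [hcr, sub_mul, add_mul, mul_assoc (c * s), ← hb', add_sub_cancel_left]

lemma dom.exists_common_witness {a b c : A} (hc : c ∈ 𝒜.S) (hac : 𝒜.dom a c)
    (hbc : 𝒜.dom b c) : ∃ r ∈ 𝒜.S, 𝒜.domBy a r c ∧ 𝒜.domBy b r c := by
  obtain ⟨s, hs, has⟩ := hac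
  obtain ⟨t, ht, hbt⟩ := hbc
  have has' := has.mul_star_mul_star
  obtain ⟨-, -, -, -, -, hsc⟩ := id has'
  refine ⟨_, ?_, has'.add_sub_mul hbt.mul_star_mul_star⟩
  set z := s * star s * star c * c
  have hfactor : s * star s * star c + t * star t * star c - z * (t * star t * star c) =
      (s * star s + t * star t - z * (t * star t)) * star c := by
    noncomm_ring
  have hss := mul_star_self_mem_PhiS hs
  have htt := mul_star_self_mem_PhiS ht
  rw [hfactor]
  exact 𝒜.S_mul _ (mem_S_of_mem_PhiS <|
    sub_mem_PhiS (𝒜.PhiS_add _ hss _ htt) (mul_mem_PhiS_of_left_mem_Z hsc htt)) _ (𝒜.S_star c hc)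

lemma cfc_mul_eq_mul_cfc {c r : A} (hcr : c * r ∈ 𝒜.Z) (hrc : r * c ∈ 𝒜.Z) {f : ℂ → ℂ}
    (hf : Continuous f) : cfc f (c * r) * c = c * cfc f (r * c) :=
  have h : SemiconjBy c (r * c) (c * r) := (mul_assoc c r c).symm
  (semiconjBy_cfc (isStarNormal_of_mem_Z_s6 hrc) (isStarNormal_of_mem_Z_s6 hcr) h hf.continuousOn).symm

lemma domBy.cfc_mul_right {a r c : A} (h : 𝒜.domBy a r c) {g : ℂ → ℂ} (hg : Continuous g)
    (hg₀ : g 0 = 0) (hg₁ : g 1 = 1) : 𝒜.domBy a r (cfc g (c * r) * c) := by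
  obtain ⟨ha, ha', har, hra, hcr, hrc⟩ := h
  have ha_cfc : a * cfc g (r * c) = a :=
    mul_cfc_eq_self (isStarNormal_of_mem_Z_s6 hrc) (by rw [← mul_assoc, ← ha]) hg hg₁
  have cfc_ha : cfc g (c * r) * a = a :=
    cfc_mul_eq_self (isStarNormal_of_mem_Z_s6 hcr) ha'.symm hg hg₁
  refine ⟨?_, ?_, har, hra, ?_, ?_⟩
  · rw [cfc_mul_eq_mul_cfc hcr hrc hg, ← mul_assoc, ← ha, ha_cfc]
  · rw [mul_assoc _ c, mul_assoc, ← ha', cfc_ha]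
  · rw [mul_assoc]
    exact 𝒜.Z_mul _ (cfc_mem_Z hcr hg hg₀) _ hcr
  · rw [cfc_mul_eq_mul_cfc hcr hrc hg, ← mul_assoc]
    exact 𝒜.Z_mul _ hrc _ (cfc_mem_Z hrc hg hg₀)

lemma cfc_mul_domBy {r c : A} (hcr : c * r ∈ 𝒜.Z) (hrc : r * c ∈ 𝒜.Z) {g k : ℂ → ℂ}
    (hg : Continuous g) (hk : Continuous k) (hg₀ : g 0 = 0) (hk₀ : k 0 = 0)
    (hgk : ∀ z, g z * (z * k z) = g z) :
    𝒜.domBy (cfc g (c * r) * c) (r * cfc k (c * r)) c := by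
  have hgZ := cfc_mem_Z hcr hg hg₀
  have hgZ' := cfc_mem_Z hrc hg hg₀
  have hct : c * (r * cfc k (c * r)) = c * r * cfc k (c * r) := (mul_assoc c r _).symm
  have htc : r * cfc k (c * r) * c = r * c * cfc k (r * c) := by
    rw [mul_assoc, cfc_mul_eq_mul_cfc hcr hrc hk, mul_assoc]
  have hctZ : c * (r * cfc k (c * r)) ∈ 𝒜.Z := hct ▸ 𝒜.Z_mul _ hcr _ (cfc_mem_Z hcr hk hk₀)
  have htcZ : r * cfc k (c * r) * c ∈ 𝒜.Z := htc ▸ 𝒜.Z_mul _ hrc _ (cfc_mem_Z hrc hk hk₀)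
  have hdt : cfc g (c * r) * c * (r * cfc k (c * r)) = cfc g (c * r) := by
    rw [mul_assoc, hct, cfc_mul_mul_cfc_eq (isStarNormal_of_mem_Z_s6 hcr) hg.continuousOn
      hk.continuousOn fun z _ ↦ hgk z]
  have htd : r * cfc k (c * r) * (cfc g (c * r) * c) = cfc g (r * c) := by
    rw [cfc_mul_eq_mul_cfc hcr hrc hg, ← mul_assoc, (commute_of_mem_Z_s6 htcZ hgZ').eq, htc,
      cfc_mul_mul_cfc_eq (isStarNormal_of_mem_Z_s6 hrc) hg.continuousOn
      hk.continuousOn fun z _ ↦ hgk z]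
  refine ⟨by rw [hdt], ?_, ?_, ?_, hctZ, htcZ⟩
  · rw [mul_assoc, htd, cfc_mul_eq_mul_cfc hcr hrc hg]
  · rw [hdt]
    exact mem_PhiS_of_mem_Z hgZ
  · rw [htd]
    exact mem_PhiS_of_mem_Z hgZ'

end StructuredCStar

/-- `(S, <)` is a predomain: if `a, b < c` then there is `d` with
`a, b < d < c`. -/
theorem StructuredCStar.predomain (𝒜 : StructuredCStar A) {a b c : A}
    (ha : a ∈ 𝒜.S) (hb : b ∈ 𝒜.S) (hc : c ∈ 𝒜.S)
    (hac : 𝒜.dom a c) (hbc : 𝒜.dom b c) :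
    ∃ d ∈ 𝒜.S, 𝒜.dom a d ∧ 𝒜.dom b d ∧ 𝒜.dom d c := by
  obtain ⟨r, hr, har, hbr⟩ := dom.exists_common_witness hc hac hbc
  obtain ⟨-, -, -, -, hcr, hrc⟩ := id har
  obtain ⟨g, k, hg, hk, hg₀, hk₀, hg₁, hgk⟩ := exists_continuous_cutoff
  have hd : cfc g (c * r) * c ∈ 𝒜.S := 𝒜.S_mul _ (𝒜.Z_sub_S (cfc_mem_Z hcr hg hg₀)) c hc
  have ht : r * cfc k (c * r) ∈ 𝒜.S := 𝒜.S_mul r hr _ (𝒜.Z_sub_S (cfc_mem_Z hcr hk hk₀))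
  exact ⟨cfc g (c * r) * c, hd,
    ⟨r, hr, har.cfc_mul_right hg hg₀ hg₁⟩,
    ⟨r, hr, hbr.cfc_mul_right hg hg₀ hg₁⟩,
    r * cfc k (c * r), ht, cfc_mul_domBy hcr hrc hg hk hg₀ hk₀ hgk⟩
end

section
/- Let (A,S,Z,Φ) be a structured C*-algebra in which Z is binormal. If a,b,s,t ∈ S satisfy a = asb = bta, as ∈ Φ[S], ta ∈ Φ[S], sb ∈ Z and bt ∈ Z, then a < b (indeed a <_{sbt} b). -/
variable {A : Type*} [CStarAlgebra A] [PartialOrder A] [StarOrderedRing A]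

/-!
Since `bt ∈ Z` commutes with `as ∈ Φ[S]`, the factor `bt` in `a = bt(as)b` can be moved past `as`,
which gives `a = a(sbt)b`; dually `sb` commutes with `ta`, which gives `a = b(sbt)a`. Binormality of
`Z` is what places `b(sb)t` and `s(bt)b` in `Z`.
-/

section Semigroup

variable {M : Type*} [Semigroup M] {a b s t : M}

theorem eq_self_mul_mul_of_commute (has : a = a * s * b) (hta : a = b * t * a)
    (h : Commute (a * s) (b * t)) : a = a * (s * b * t) * b :=
  calc
    a = b * t * (a * s * b) := by rw [← has, ← hta]
    _ = b * t * (a * s) * b := by simp only [mul_assoc]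
    _ = a * s * (b * t) * b := by rw [h.eq]
    _ = a * (s * b * t) * b := by simp only [mul_assoc]

theorem eq_mul_mul_self_of_commute (has : a = a * s * b) (hta : a = b * t * a)
    (h : Commute (s * b) (t * a)) : a = b * (s * b * t) * a :=
  calc
    a = b * t * a * s * b := by rw [← hta, ← has]
    _ = b * (t * a * (s * b)) := by simp only [mul_assoc]
    _ = b * (s * b * (t * a)) := by rw [h.eq]
    _ = b * (s * b * t) * a := by simp only [mul_assoc]

end Semigroup

namespace StructuredCStar

variable {𝒜 : StructuredCStar A} {x y z : A}

theorem Z_subset_range : 𝒜.Z ⊆ Set.range 𝒜.Φ :=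
  fun z hz => ⟨z, 𝒜.Z_fixed z hz⟩

theorem commute_of_mem_Z_s8 (hz : z ∈ 𝒜.Z) (hx : x ∈ Set.range 𝒜.Φ) : Commute z x := by
  obtain ⟨a, rfl⟩ := hx
  exact 𝒜.Z_central z hz a

theorem PhiS_mul_mem_right (hx : x ∈ 𝒜.Φ '' 𝒜.S) (hy : y ∈ Set.range 𝒜.Φ) :
    x * y ∈ 𝒜.Φ '' 𝒜.S := by
  obtain ⟨a, rfl⟩ := hy
  exact 𝒜.PhiS_ideal_right x hx a

theorem PhiS_mul_mem_left (hx : x ∈ Set.range 𝒜.Φ) (hy : y ∈ 𝒜.Φ '' 𝒜.S) :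
    x * y ∈ 𝒜.Φ '' 𝒜.S := by
  obtain ⟨a, rfl⟩ := hx
  exact 𝒜.PhiS_ideal_left y hy a

namespace Binormal

variable {N : Set A} {b s t : A}

theorem mul_mul_mul_mem_left (hN : 𝒜.Binormal N) (hb : b ∈ 𝒜.S) (ht : t ∈ 𝒜.S)
    (hsb : s * b ∈ N) (hbt : b * t ∈ N) : b * (s * b * t) ∈ N := by
  simpa only [mul_assoc] using hN b hb t ht hbt (s * b) hsb

theorem mul_mul_mul_mem_right (hN : 𝒜.Binormal N) (hs : s ∈ 𝒜.S) (hb : b ∈ 𝒜.S)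
    (hsb : s * b ∈ N) (hbt : b * t ∈ N) : s * b * t * b ∈ N := by
  simpa only [mul_assoc] using hN s hs b hb hsb (b * t) hbt

end Binormal

end StructuredCStar

/-- splitting the witness: if `Z` is binormal, `a = asb = bta`,
`as, ta ∈ Φ[S]` and `sb, bt ∈ Z`, then `a < b` (indeed `a <_{sbt} b`). -/
theorem StructuredCStar.dom_of_split_witnesses (𝒜 : StructuredCStar A)
    (hZ : 𝒜.Binormal 𝒜.Z) {a b s t : A}
    (ha : a ∈ 𝒜.S) (hb : b ∈ 𝒜.S) (hs : s ∈ 𝒜.S) (ht : t ∈ 𝒜.S)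
    (h1 : a = a * s * b) (h2 : a = b * t * a)
    (h3 : a * s ∈ 𝒜.Φ '' 𝒜.S) (h4 : t * a ∈ 𝒜.Φ '' 𝒜.S)
    (h5 : s * b ∈ 𝒜.Z) (h6 : b * t ∈ 𝒜.Z) :
    𝒜.dom a b ∧ 𝒜.domBy a (s * b * t) b := by
  have has_comm : Commute (a * s) (b * t) :=
    (commute_of_mem_Z_s8 h6 (Set.image_subset_range _ _ h3)).symm
  have hta_comm : Commute (s * b) (t * a) :=
    commute_of_mem_Z_s8 h5 (Set.image_subset_range _ _ h4)
  have hleft : a * (s * b * t) ∈ 𝒜.Φ '' 𝒜.S := by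
    simpa only [mul_assoc] using PhiS_mul_mem_right h3 (Z_subset_range h6)
  have hright : s * b * t * a ∈ 𝒜.Φ '' 𝒜.S := by
    simpa only [mul_assoc] using PhiS_mul_mem_left (Z_subset_range h5) h4
  have hdom : 𝒜.domBy a (s * b * t) b :=
    ⟨eq_self_mul_mul_of_commute h1 h2 has_comm, eq_mul_mul_self_of_commute h1 h2 hta_comm,
      hleft, hright, hZ.mul_mul_mul_mem_left hb ht h5 h6, hZ.mul_mul_mul_mem_right hs hb h5 h6⟩
  exact ⟨⟨s * b * t, 𝒜.S_mul _ (𝒜.Z_sub_S h5) t ht, hdom⟩, hdom⟩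
end

section
/- Let (A,S,Z,Φ) be a structured C*-algebra with Φ normal. Then for all a ∈ A and s ∈ S, if as ∈ Φ[S] then azs ∈ Φ[S] for every z ∈ Z. -/
variable {A : Type*} [CStarAlgebra A] [PartialOrder A] [StarOrderedRing A]

/-!
Put `b = s* s`. Since `s` is the limit of `s b (b + ε)⁻¹` as `ε → 0⁺`, and `z` commutes with
`s s*`, the element `a z s` is the limit of `a z s b (b + ε)⁻¹ = (a s) (s* z s) (b + ε)⁻¹`. Here
`a s ∈ Φ[S]` and `s* z s ∈ Φ[A]`, and right multiplication by `(b + ε)⁻¹` preserves `Φ[S]`, which is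
closed. Finally `s* z s ∈ Φ[A]` because `Z` is spanned by the elements `w* w` with `w ∈ Z`, and
`s* w* w s = (w s)* (w s)` lies in `S₊ ⊆ Φ[S]`.
-/

open Filter Topology
open scoped Ring

theorem span_range_star_mul_self (B : Type*) [NonUnitalCStarAlgebra B] :
    Submodule.span ℂ (Set.range fun w : B => star w * w) = ⊤ := by
  let _ := CStarAlgebra.spectralOrder B
  let _ := CStarAlgebra.spectralOrderedRing B
  rw [← CStarAlgebra.span_nonneg]
  congr 1
  ext b
  simp only [Set.mem_range, Set.mem_ofPred_eq, CStarAlgebra.nonneg_iff_eq_star_mul_self, eq_comm]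

theorem isStrictlyPositive_star_mul_self_add_algebraMap (s : A) {ε : ℝ} (hε : 0 < ε) :
    IsStrictlyPositive (star s * s + algebraMap ℝ A ε) :=
  (isStrictlyPositive_algebraMap hε).nonneg_add (star_mul_self_nonneg s)

theorem norm_ringInverse_le_of_algebraMap_le {a : A} {ε : ℝ} (hε : 0 < ε)
    (ha : algebraMap ℝ A ε ≤ a) : ‖a⁻¹ʳ‖ ≤ ε⁻¹ := by
  have hεA : IsStrictlyPositive (algebraMap ℝ A ε) := isStrictlyPositive_algebraMap hε
  have hinv : algebraMap ℝ A ε⁻¹ = (algebraMap ℝ A ε)⁻¹ʳ := by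
    rw [← one_mul (_⁻¹ʳ), Ring.eq_mul_inverse_iff_mul_eq _ _ _ hεA.isUnit, ← map_mul,
      inv_mul_cancel₀ hε.ne', map_one]
  rw [CStarAlgebra.norm_le_iff_le_algebraMap _ (by positivity) (hεA.of_le ha).ringInverse.nonneg,
    hinv]
  exact CStarAlgebra.ringInverse_le_ringInverse ha

theorem sub_mul_star_mul_self_mul_ringInverse (s : A) {ε : ℝ} (hε : 0 < ε) :
    s - s * (star s * s) * (star s * s + algebraMap ℝ A ε)⁻¹ʳ =
      ε • (s * (star s * s + algebraMap ℝ A ε)⁻¹ʳ) := by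
  set u := star s * s + algebraMap ℝ A ε with hu
  have hunit : IsUnit u := (isStrictlyPositive_star_mul_self_add_algebraMap s hε).isUnit
  calc s - s * (star s * s) * u⁻¹ʳ = s * (u - star s * s) * u⁻¹ʳ := by
        rw [mul_sub, sub_mul, Ring.mul_inverse_cancel_right _ _ hunit]
    _ = ε • (s * u⁻¹ʳ) := by
        rw [hu, add_sub_cancel_left, ← Algebra.commutes, ← Algebra.smul_def, smul_mul_assoc]

theorem norm_mul_ringInverse_sq_le (s : A) {ε : ℝ} (hε : 0 < ε) :
    ‖s * (star s * s + algebraMap ℝ A ε)⁻¹ʳ‖ ^ 2 ≤ ε⁻¹ := by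
  set u := star s * s + algebraMap ℝ A ε
  have hu : IsStrictlyPositive u := isStrictlyPositive_star_mul_self_add_algebraMap s hε
  have hstar : star u⁻¹ʳ = u⁻¹ʳ := hu.ringInverse.isSelfAdjoint.star_eq
  have hle : star (s * u⁻¹ʳ) * (s * u⁻¹ʳ) ≤ u⁻¹ʳ :=
    calc star (s * u⁻¹ʳ) * (s * u⁻¹ʳ) = star u⁻¹ʳ * (star s * s) * u⁻¹ʳ := by
          simp only [star_mul, mul_assoc]
      _ ≤ star u⁻¹ʳ * u * u⁻¹ʳ :=
          star_left_conjugate_le_conjugate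
            (le_add_of_nonneg_right (isStrictlyPositive_algebraMap hε).nonneg) _
      _ = u⁻¹ʳ := by rw [hstar, Ring.inverse_mul_cancel _ hu.isUnit, one_mul]
  calc ‖s * u⁻¹ʳ‖ ^ 2 = ‖star (s * u⁻¹ʳ) * (s * u⁻¹ʳ)‖ := by
        rw [CStarRing.norm_star_mul_self, sq]
    _ ≤ ‖u⁻¹ʳ‖ := CStarAlgebra.norm_le_norm_of_nonneg_of_le (star_mul_self_nonneg _) hle
    _ ≤ ε⁻¹ :=
        norm_ringInverse_le_of_algebraMap_le hε (le_add_of_nonneg_left (star_mul_self_nonneg s))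

theorem tendsto_mul_star_mul_self_mul_ringInverse (s : A) :
    Tendsto (fun ε : ℝ => s * (star s * s) * (star s * s + algebraMap ℝ A ε)⁻¹ʳ)
      (𝓝[>] 0) (𝓝 s) := by
  have hbound : ∀ᶠ ε : ℝ in 𝓝[>] 0,
      ‖s * (star s * s) * (star s * s + algebraMap ℝ A ε)⁻¹ʳ - s‖ ≤ √ε := by
    filter_upwards [self_mem_nhdsWithin] with ε (hε : 0 < ε)
    rw [norm_sub_rev, sub_mul_star_mul_self_mul_ringInverse s hε]
    refine Real.le_sqrt_of_sq_le ?_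
    calc ‖ε • (s * (star s * s + algebraMap ℝ A ε)⁻¹ʳ)‖ ^ 2
        = ε ^ 2 * ‖s * (star s * s + algebraMap ℝ A ε)⁻¹ʳ‖ ^ 2 := by
          rw [norm_smul, mul_pow, Real.norm_eq_abs, sq_abs]
      _ ≤ ε ^ 2 * ε⁻¹ := by gcongr; exact norm_mul_ringInverse_sq_le s hε
      _ = ε := by rw [sq, mul_inv_cancel_right₀ hε.ne']
  have hsqrt : Tendsto (√·) (𝓝[>] (0 : ℝ)) (𝓝 0) := by
    simpa only [Real.sqrt_zero] using (Real.continuous_sqrt.tendsto 0).mono_left nhdsWithin_le_nhds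
  exact tendsto_iff_norm_sub_tendsto_zero.2
    (squeeze_zero' (.of_forall fun _ => norm_nonneg _) hbound hsqrt)

namespace StructuredCStar

variable {𝒜 : StructuredCStar A}

theorem mem_PhiS_iff {x : A} : x ∈ 𝒜.Φ '' 𝒜.S ↔ x ∈ 𝒜.S ∧ 𝒜.Φ x = x := by
  constructor
  · rintro ⟨y, hy, rfl⟩
    exact ⟨𝒜.PhiS_sub_S y hy, 𝒜.Φ_idem y⟩
  · rintro ⟨hx, hfix⟩
    exact ⟨x, hx, hfix⟩

variable (𝒜) in
theorem isClosed_PhiS : IsClosed (𝒜.Φ '' 𝒜.S) := by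
  have hcont : Continuous 𝒜.Φ :=
    AddMonoidHomClass.continuous_of_bound 𝒜.Φ 1 fun a => by simpa using 𝒜.Φ_contractive a
  have hPhiS : 𝒜.Φ '' 𝒜.S = 𝒜.S ∩ {x | 𝒜.Φ x = x} := Set.ext fun _ => mem_PhiS_iff
  rw [hPhiS]
  exact 𝒜.S_isClosed.inter (isClosed_eq hcont continuous_id)

theorem mul_mem_PhiS {x y : A} (hx : x ∈ 𝒜.Φ '' 𝒜.S) (hy : 𝒜.Φ y = y) :
    x * y ∈ 𝒜.Φ '' 𝒜.S :=
  hy ▸ 𝒜.PhiS_ideal_right x hx y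

theorem Phi_star_mul_self {s : A} (hs : s ∈ 𝒜.S) : 𝒜.Φ (star s * s) = star s * s :=
  (mem_PhiS_iff.1 (𝒜.S_sq_sub_PhiS s hs)).2

theorem Phi_self_mul_star {s : A} (hs : s ∈ 𝒜.S) : 𝒜.Φ (s * star s) = s * star s := by
  simpa only [star_star] using Phi_star_mul_self (𝒜.S_star s hs)

/- `Φ 1` may differ from `1`, and then `u⁻¹` itself need not be fixed; but `x u⁻¹` is the only
solution `y` of `y u = x`, and `Φ` commutes with right multiplication by `u`. -/
theorem Phi_mul_inv {x b : A} {u : Aˣ} {r : ℝ} (hx : 𝒜.Φ x = x) (hb : 𝒜.Φ b = b)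
    (hu : (u : A) = b + algebraMap ℝ A r) : 𝒜.Φ (x * ↑u⁻¹) = x * ↑u⁻¹ := by
  have hmul (y : A) : 𝒜.Φ (y * u) = 𝒜.Φ y * u := by
    have hyb : 𝒜.Φ (y * b) = 𝒜.Φ y * b := by rw [← hb, 𝒜.Φ_mul_right, hb]
    have hyr : 𝒜.Φ (r • y) = r • 𝒜.Φ y := by rw [← Complex.coe_smul, map_smul, Complex.coe_smul]
    rw [hu, mul_add, mul_add, map_add, hyb, ← Algebra.commutes, ← Algebra.commutes,
      ← Algebra.smul_def, ← Algebra.smul_def, hyr]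
  rw [Units.eq_mul_inv_iff_mul_eq, ← hmul, Units.inv_mul_cancel_right, hx]

theorem mul_inv_mem_PhiS {x b : A} {u : Aˣ} {r : ℝ} (hx : x ∈ 𝒜.Φ '' 𝒜.S) (hb : 𝒜.Φ b = b)
    (hu : (u : A) = b + algebraMap ℝ A r) : x * ↑u⁻¹ ∈ 𝒜.Φ '' 𝒜.S := by
  have hfix := (mem_PhiS_iff.1 hx).2
  rw [← Phi_mul_inv hfix hb hu]
  nth_rw 1 [← hfix]
  rw [𝒜.Φ_mul_left, hfix]
  exact 𝒜.PhiS_ideal_right x hx _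

variable (𝒜) in
/-- `Z` as a non-unital star subalgebra, which makes the theory of C*-algebras available for it. The
axioms of `StructuredCStar` allow `Z = ∅`, which is excluded here. -/
def subalgebraZ (hZ : 𝒜.Z.Nonempty) : NonUnitalStarSubalgebra ℂ A where
  carrier := 𝒜.Z
  add_mem' ha hb := 𝒜.Z_add _ ha _ hb
  mul_mem' ha hb := 𝒜.Z_mul _ ha _ hb
  zero_mem' := by
    obtain ⟨z, hz⟩ := hZ
    simpa using 𝒜.Z_smul 0 z hz
  smul_mem' c _ ha := 𝒜.Z_smul c _ ha
  star_mem' ha := 𝒜.Z_star _ ha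

theorem mem_span_star_mul_self_of_mem_Z {z : A} (hz : z ∈ 𝒜.Z) :
    z ∈ Submodule.span ℂ ((fun w => star w * w) '' 𝒜.Z) := by
  let Z := 𝒜.subalgebraZ ⟨z, hz⟩
  have : IsClosed (Z : Set A) := 𝒜.Z_isClosed
  have hspan : (⟨z, hz⟩ : Z) ∈ Submodule.span ℂ (Set.range fun w : Z => star w * w) :=
    span_range_star_mul_self Z ▸ Submodule.mem_top
  refine Submodule.span_mono ?_ (Submodule.apply_mem_span_image_of_mem_span
    (NonUnitalStarSubalgebraClass.subtype Z : Z →ₗ[ℂ] A) hspan)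
  rintro _ ⟨_, ⟨w, rfl⟩, rfl⟩
  exact ⟨w, w.2, rfl⟩

theorem Phi_star_mul_Z_mul {s z : A} (hs : s ∈ 𝒜.S) (hz : z ∈ 𝒜.Z) :
    𝒜.Φ (star s * z * s) = star s * z * s := by
  have hspan := mem_span_star_mul_self_of_mem_Z hz
  clear hz
  induction hspan using Submodule.span_induction with
  | mem x hx =>
    obtain ⟨w, hw, rfl⟩ := hx
    simpa only [star_mul, mul_assoc] using Phi_star_mul_self (𝒜.S_mul w (𝒜.Z_sub_S hw) s hs)
  | zero => simp only [mul_zero, zero_mul, map_zero]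
  | add x y _ _ hx hy => simp only [mul_add, add_mul, map_add, hx, hy]
  | smul c x _ hx => simp only [mul_smul_comm, smul_mul_assoc, map_smul, hx]

theorem commute_Z_self_mul_star {s z : A} (hs : s ∈ 𝒜.S) (hz : z ∈ 𝒜.Z) :
    Commute z (s * star s) :=
  Phi_self_mul_star hs ▸ 𝒜.Z_central z hz _

theorem mul_mul_mem_PhiS_of_commute {a s z : A} (hs : s ∈ 𝒜.S) (h : a * s ∈ 𝒜.Φ '' 𝒜.S)
    (hz : Commute z (s * star s)) (hfix : 𝒜.Φ (star s * z * s) = star s * z * s) :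
    a * z * s ∈ 𝒜.Φ '' 𝒜.S := by
  have hlim := (tendsto_mul_star_mul_self_mul_ringInverse s).const_mul (a * z)
  refine 𝒜.isClosed_PhiS.mem_of_tendsto hlim ?_
  filter_upwards [self_mem_nhdsWithin] with ε hε
  obtain ⟨u, hu⟩ := (isStrictlyPositive_star_mul_self_add_algebraMap s hε).isUnit
  have hmove : a * z * (s * (star s * s) * ↑u⁻¹) = a * s * (star s * z * s) * ↑u⁻¹ :=
    calc a * z * (s * (star s * s) * ↑u⁻¹)
        = a * (z * (s * star s)) * s * ↑u⁻¹ := by simp only [mul_assoc]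
      _ = a * s * (star s * z * s) * ↑u⁻¹ := by rw [hz.eq]; simp only [mul_assoc]
  rw [← hu, Ring.inverse_unit, hmove]
  exact mul_inv_mem_PhiS (mul_mem_PhiS h hfix) (Phi_star_mul_self hs) hu

variable (𝒜) in
theorem mul_Z_mul_mem_PhiS_general {a s : A} (hs : s ∈ 𝒜.S)
    (h : a * s ∈ 𝒜.Φ '' 𝒜.S) : ∀ z ∈ 𝒜.Z, a * z * s ∈ 𝒜.Φ '' 𝒜.S := fun _ hz =>
  mul_mul_mem_PhiS_of_commute hs h (commute_Z_self_mul_star hs hz) (Phi_star_mul_Z_mul hs hz)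

end StructuredCStar

/-- if `Φ` is normal, `a ∈ A`, `s ∈ S` and `as ∈ Φ[S]`, then
`azs ∈ Φ[S]` for all `z ∈ Z`. -/
theorem StructuredCStar.mul_Z_mul_mem_PhiS (𝒜 : StructuredCStar A)
    (hnormal : ∀ a : A, ∀ s ∈ 𝒜.S, 𝒜.Φ (star s * a * s) = star s * 𝒜.Φ a * s)
    {a s : A} (hs : s ∈ 𝒜.S) (h : a * s ∈ 𝒜.Φ '' 𝒜.S) :
    ∀ z ∈ 𝒜.Z, a * z * s ∈ 𝒜.Φ '' 𝒜.S :=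
  𝒜.mul_Z_mul_mem_PhiS_general hs h
end
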